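/- Fix real exponents q, p, r, γ with 1 < q < p < r and 0 < γ < 1, and constants c₃ > 0, c₄ > 0. Then there exists λ* > 0 such that for every λ ∈ (0, λ*) there are no real numbers A > 0, B ≥ 0, C ≥ 0, D ≥ 0 satisfying simultaneously: the Nehari identity A + D = B + λ·C, the degeneracy condition (p+γ−1)·A + (q+γ−1)·D = λ·(r+γ−1)·C, the bound B ≤ c₃·A^{(1−γ)/p}, and the bound C ≤ c₄·A^{r/p}. (Abstract form of Proposition 3: the degenerate part N_λ⁰ of the Nehari manifold is empty for all small λ > 0.) -/

import Mathlib

open Real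

/-!
Eliminating `C` between the Nehari identity and the degeneracy condition bounds `A` by a multiple
of `B`, and the degeneracy condition alone bounds `A` by a multiple of `λ * C`. The Sobolev bounds
turn these into `A ≤ K * A ^ s` with `s < 1` and `A ≤ λ * L * A ^ t` with `1 < t`. The first keeps
`A` bounded above, the second pushes `A` to infinity as `λ → 0`, so both hold only when `λ` is at
least an explicit positive threshold.
-/

lemma le_mul_rpow_iff_rpow_one_sub_le {x : ℝ} (hx : 0 < x) (K s : ℝ) :
    x ≤ K * x ^ s ↔ x ^ (1 - s) ≤ K := by
  rw [rpow_sub hx, rpow_one, div_le_iff₀ (rpow_pos_of_pos hx s)]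

lemma rpow_div_le_of_le_mul_rpow {x K L s t : ℝ} (hx : 0 < x) (hs : s < 1) (ht : 1 ≤ t)
    (hK : x ≤ K * x ^ s) (hL : x ≤ L * x ^ t) : K ^ ((1 - t) / (1 - s)) ≤ L := by
  rw [le_mul_rpow_iff_rpow_one_sub_le hx] at hK hL
  have hs' : 0 < 1 - s := sub_pos.2 hs
  have hexp : (1 - t) / (1 - s) ≤ 0 := div_nonpos_of_nonpos_of_nonneg (sub_nonpos.2 ht) hs'.le
  calc K ^ ((1 - t) / (1 - s))
      ≤ (x ^ (1 - s)) ^ ((1 - t) / (1 - s)) :=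
        rpow_le_rpow_of_nonpos (rpow_pos_of_pos hx _) hK hexp
    _ = x ^ (1 - t) := by rw [← rpow_mul hx.le, mul_div_cancel₀ _ hs'.ne']
    _ ≤ L := hL

/-- The two equations that define the degenerate part `N_λ⁰` of the Nehari manifold, written for
`A = ‖∇u‖_p^p`, `B = ∫ a |u|^(1 - γ)`, `C = ‖u‖_r^r` and `D = ∫ ξ |∇u|^q`. The sign conditions on
these quantities are kept separate. -/
structure IsDegenerateNehari (q p r γ lam A B C D : ℝ) : Prop where
  nehari : A + D = B + lam * C
  degenerate : (p + γ - 1) * A + (q + γ - 1) * D = lam * ((r + γ - 1) * C)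

/-- A value `λ*` below which `N_λ⁰` is empty, given `B ≤ c₃ * A ^ ((1 - γ) / p)` and
`C ≤ c₄ * A ^ (r / p)`. -/
noncomputable def nehariThreshold (p r γ c₃ c₄ : ℝ) : ℝ :=
  ((r + γ - 1) * c₃ / (r - p)) ^ ((p - r) / (p + γ - 1)) * ((p + γ - 1) / ((r + γ - 1) * c₄))

lemma nehariThreshold_pos {p r γ c₃ c₄ : ℝ} (hγp : 1 - γ < p) (hpr : p < r)
    (hc₃ : 0 < c₃) (hc₄ : 0 < c₄) : 0 < nehariThreshold p r γ c₃ c₄ := by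
  have hp : 0 < p + γ - 1 := by linarith
  have hr : 0 < r + γ - 1 := by linarith
  have hbase : 0 < (r + γ - 1) * c₃ / (r - p) := div_pos (mul_pos hr hc₃) (sub_pos.2 hpr)
  exact mul_pos (rpow_pos_of_pos hbase _) (div_pos hp (mul_pos hr hc₄))

namespace IsDegenerateNehari

variable {q p r γ lam A B C D : ℝ}

lemma sub_mul_le (h : IsDegenerateNehari q p r γ lam A B C D) (hqr : q ≤ r) (hD : 0 ≤ D) :
    (r - p) * A ≤ (r + γ - 1) * B := by
  have hsum : (r - p) * A + (r - q) * D = (r + γ - 1) * B := by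
    linear_combination (r + γ - 1) * h.nehari - h.degenerate
  have hD' : 0 ≤ (r - q) * D := mul_nonneg (sub_nonneg.2 hqr) hD
  linarith

lemma add_sub_one_mul_le (h : IsDegenerateNehari q p r γ lam A B C D) (hγq : 1 - γ ≤ q)
    (hD : 0 ≤ D) : (p + γ - 1) * A ≤ lam * ((r + γ - 1) * C) := by
  have hD' : 0 ≤ (q + γ - 1) * D := mul_nonneg (by linarith) hD
  linarith [h.degenerate]

lemma nehariThreshold_le {c₃ c₄ : ℝ} (h : IsDegenerateNehari q p r γ lam A B C D)
    (hp : 0 < p) (hγq : 1 - γ ≤ q) (hqr : q ≤ r) (hγp : 1 - γ < p) (hpr : p < r)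
    (hc₄ : 0 < c₄) (hlam : 0 ≤ lam) (hA : 0 < A) (hD : 0 ≤ D)
    (hB : B ≤ c₃ * A ^ ((1 - γ) / p)) (hC : C ≤ c₄ * A ^ (r / p)) :
    nehariThreshold p r γ c₃ c₄ ≤ lam := by
  have hpγ : 0 < p + γ - 1 := by linarith
  have hrγ : 0 < r + γ - 1 := by linarith
  have upper : A ≤ (r + γ - 1) * c₃ / (r - p) * A ^ ((1 - γ) / p) := by
    rw [div_mul_eq_mul_div, le_div_iff₀' (sub_pos.2 hpr), mul_assoc]
    exact (h.sub_mul_le hqr hD).trans (by gcongr)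
  have lower : A ≤ lam * ((r + γ - 1) * c₄) / (p + γ - 1) * A ^ (r / p) := by
    rw [div_mul_eq_mul_div, le_div_iff₀' hpγ, mul_assoc, mul_assoc]
    exact (h.add_sub_one_mul_le hγq hD).trans (by gcongr)
  have key := rpow_div_le_of_le_mul_rpow hA ((div_lt_one hp).2 hγp) ((one_le_div hp).2 hpr.le)
    upper lower
  have hexp : (1 - r / p) / (1 - (1 - γ) / p) = (p - r) / (p + γ - 1) := by
    rw [one_sub_div hp.ne', one_sub_div hp.ne', div_div_div_cancel_right₀ hp.ne',
      sub_sub_eq_add_sub]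
  rw [hexp, le_div_iff₀ hpγ] at key
  rwa [nehariThreshold, ← mul_div_assoc, div_le_iff₀ (by positivity)]

end IsDegenerateNehari

theorem N0_empty_small_lambda_general {q p r γ c₃ c₄ : ℝ}
    (hp : 0 < p) (hγq : 1 - γ ≤ q) (hqr : q ≤ r) (hγp : 1 - γ < p) (hpr : p < r)
    (hc₃ : 0 < c₃) (hc₄ : 0 < c₄) :
    ∃ lamStar > 0, ∀ lam : ℝ, 0 < lam → lam < lamStar →
      ¬ ∃ A B C D : ℝ,
        0 < A ∧ 0 ≤ D ∧ IsDegenerateNehari q p r γ lam A B C D ∧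
        B ≤ c₃ * A ^ ((1 - γ) / p) ∧
        C ≤ c₄ * A ^ (r / p) := by
  refine ⟨nehariThreshold p r γ c₃ c₄, nehariThreshold_pos hγp hpr hc₃ hc₄, ?_⟩
  rintro lam hlam hlt ⟨A, B, C, D, hA, hD, h, hB, hC⟩
  exact hlt.not_ge (h.nehariThreshold_le hp hγq hqr hγp hpr hc₄ hlam.le hA hD hB hC)

/-- Abstract form of Proposition 3: the degenerate part `N_λ⁰` of the Nehari
manifold is empty for all small `λ > 0`. -/
theorem N0_empty_small_lambda (q p r γ c₃ c₄ : ℝ)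
    (hq : 1 < q) (hqp : q < p) (hpr : p < r)
    (hγ0 : 0 < γ) (hγ1 : γ < 1) (hc₃ : 0 < c₃) (hc₄ : 0 < c₄) :
    ∃ lamStar > 0, ∀ lam : ℝ, 0 < lam → lam < lamStar →
      ¬ ∃ A B C D : ℝ,
        0 < A ∧ 0 ≤ B ∧ 0 ≤ C ∧ 0 ≤ D ∧
        A + D = B + lam * C ∧
        (p + γ - 1) * A + (q + γ - 1) * D = lam * ((r + γ - 1) * C) ∧
        B ≤ c₃ * A ^ ((1 - γ) / p) ∧
        C ≤ c₄ * A ^ (r / p) := by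
  obtain ⟨lamStar, hpos, hempty⟩ := N0_empty_small_lambda_general (q := q) (p := p) (r := r)
    (γ := γ) (by linarith) (by linarith) (by linarith) (by linarith) hpr hc₃ hc₄
  exact ⟨lamStar, hpos, fun lam hlam hlt ⟨A, B, C, D, hA, _, _, hD, hN, hdeg, hB, hC⟩ ↦
    hempty lam hlam hlt ⟨A, B, C, D, hA, hD, ⟨hN, hdeg⟩, hB, hC⟩⟩
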